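/- Every hyperoval of PHG(2, ℤ/4ℤ) contains exactly 168 ordered quadrangles, i.e. exactly 168 ordered 4-tuples of its points lying in four pairwise distinct neighbour classes no three of which are collinear in the quotient plane PG(2,𝔽₂). -/

import Mathlib

/-- A point of a projective Hjelmslev geometry PHG(n-1, R): a free rank-1 submodule
of Rⁿ, i.e. the R-span of a vector having at least one unit coordinate. -/
def IsPoint {R : Type} [CommRing R] {n : ℕ} (P : Submodule R (Fin n → R)) : Prop :=
  ∃ v : Fin n → R, (∃ i, IsUnit (v i)) ∧ P = Submodule.span R {v}

/-- A free rank-k submodule of Rⁿ: a submodule linearly isomorphic to Rᵏ. -/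
def IsFreeRank {R : Type} [CommRing R] {n : ℕ} (k : ℕ) (L : Submodule R (Fin n → R)) : Prop :=
  Nonempty ((Fin k → R) ≃ₗ[R] L)

/-- A line of PHG(2, R): a free rank-2 submodule of R³. -/
abbrev IsLine {R : Type} [CommRing R] (L : Submodule R (Fin 3 → R)) : Prop := IsFreeRank 2 L

/-- A hyperoval of PHG(2, R), |R| = 4: a set of 7 points with at most 2 points on each line. -/
def IsHyperoval {R : Type} [CommRing R] (H : Set (Submodule R (Fin 3 → R))) : Prop :=
  (∀ P ∈ H, IsPoint P) ∧ H.ncard = 7 ∧ ∀ L, IsLine L → {P ∈ H | P ≤ L}.ncard ≤ 2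

abbrev R4 := ZMod 4

/-- Reduction mod 2 on ℤ/4ℤ. -/
def red2 : ZMod 4 →+* ZMod 2 := ZMod.castHom (show (2:ℕ) ∣ 4 by norm_num) (ZMod 2)

instance : RingHomSurjective red2 :=
  ⟨fun y => by
    fin_cases y
    · exact ⟨0, map_zero _⟩
    · exact ⟨1, map_one _⟩⟩

/-- Coordinatewise reduction mod 2, as a semilinear map (Fin 3 → ℤ/4ℤ) → (Fin 3 → 𝔽₂). -/
def redMap : (Fin 3 → ZMod 4) →ₛₗ[red2] (Fin 3 → ZMod 2) where
  toFun v := fun i => red2 (v i)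
  map_add' := by intros; funext i; simp
  map_smul' := by intros; funext i; simp [Pi.smul_apply, smul_eq_mul]

/-- The neighbour class of a point, viewed as a point of the quotient plane PG(2,𝔽₂):
the 𝔽₂-line of 𝔽₂³ spanned by the coordinatewise reduction mod 2. -/
def redPt (P : Submodule R4 (Fin 3 → R4)) : Submodule (ZMod 2) (Fin 3 → ZMod 2) :=
  Submodule.map redMap P

/-- Three points of PG(2,𝔽₂) (given as subspaces of 𝔽₂³) are collinear iff together
they span a subspace of dimension at most 2. -/
def CollinearF2 (A B C : Submodule (ZMod 2) (Fin 3 → ZMod 2)) : Prop :=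
  Module.finrank (ZMod 2) ↥(A ⊔ B ⊔ C) ≤ 2

/-- An ordered quadrangle of PHG(2, ℤ/4ℤ): a 4-tuple of points lying in four pairwise
distinct neighbour classes, no three of which are collinear in PG(2,𝔽₂). -/
def IsQuadrangleT (Q : Fin 4 → Submodule R4 (Fin 3 → R4)) : Prop :=
  (∀ i, IsPoint (Q i)) ∧
  (∀ i j, i ≠ j → redPt (Q i) ≠ redPt (Q j)) ∧
  ∀ i j k, i ≠ j → i ≠ k → j ≠ k → ¬ CollinearF2 (redPt (Q i)) (redPt (Q j)) (redPt (Q k))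

/-!
If two points `P`, `P'` of a hyperoval were neighbours, then the lines through `P` that are
neighbours of some line joining `P` and `P'` would all contain `P'`. So the line from `P` to any
further point of the hyperoval is determined by its slope relative to such a join, an element of
`ℤ/4ℤ`; different points have different slopes, which leaves at most `4 + 2 < 7` points.

Hence a hyperoval meets each of the seven neighbour classes exactly once, and its quadrangles
correspond to those of PG(2,𝔽₂). The latter are the quadruples `(x, y, z, x + y + z)` with `x, y, z`
a basis of `𝔽₂³`, which number `|GL(3, 2)| = 7 · 6 · 4 = 168`.
-/

open Matrix Module Submodule

section Unimodular

variable {R : Type*} [CommRing R] {n : ℕ}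

/-- A vector with at least one unit coordinate. Such vectors generate the points of PHG(n-1, R), and
as coefficient vectors of linear forms they define its hyperplanes. -/
def IsUnimodular (v : Fin n → R) : Prop := ∃ i, IsUnit (v i)

theorem IsUnimodular.exists_dotProduct_eq_one {v : Fin n → R} (hv : IsUnimodular v) :
    ∃ g, g ⬝ᵥ v = 1 := by
  obtain ⟨i, u, hu⟩ := hv
  exact ⟨Pi.single i ↑u⁻¹, by simp [← hu]⟩

theorem isUnimodular_of_dotProduct_eq_one [IsLocalRing R] {g v : Fin n → R} (h : g ⬝ᵥ v = 1) :
    IsUnimodular v := by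
  obtain ⟨i, -, hi⟩ := IsLocalRing.exists_of_isUnit_sum (h.symm ▸ isUnit_one : IsUnit (g ⬝ᵥ v))
  exact ⟨i, isUnit_of_mul_isUnit_right hi⟩

theorem IsUnimodular.exists_isUnimodular_dotProduct_eq_zero [Nontrivial (Fin n)] {v : Fin n → R}
    (hv : IsUnimodular v) : ∃ w, IsUnimodular w ∧ w ⬝ᵥ v = 0 := by
  obtain ⟨i, u, hu⟩ := hv
  obtain ⟨j, hji⟩ := exists_ne i
  refine ⟨Pi.single j 1 - Pi.single i (v j * ↑u⁻¹), ⟨j, by simp [hji]⟩, ?_⟩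
  simp [sub_dotProduct, ← hu]

end Unimodular

section Hyperplane

variable {R : Type} [CommRing R] {n : ℕ}

/-- The hyperplane of Rⁿ with equation `w ⬝ᵥ x = 0`. For unimodular `w` and `n = 3` it is a line of
PHG(2, R), whose dual coordinates are `w`. -/
def hyperplane (w : Fin n → R) : Submodule R (Fin n → R) :=
  LinearMap.ker (dotProductBilin R R w)

theorem mem_hyperplane {w x : Fin n → R} : x ∈ hyperplane w ↔ w ⬝ᵥ x = 0 := Iff.rfl

theorem span_singleton_le_hyperplane {w x : Fin n → R} :
    span R {x} ≤ hyperplane w ↔ w ⬝ᵥ x = 0 := by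
  rw [span_singleton_le_iff_mem, mem_hyperplane]

theorem mem_hyperplane_iff_apply_eq {w x : Fin (n + 1) → R} {i : Fin (n + 1)} {u : Rˣ}
    (hu : u = w i) :
    x ∈ hyperplane w ↔ x i = -(↑u⁻¹ * i.removeNth w ⬝ᵥ i.removeNth x) := by
  rw [mem_hyperplane, dotProduct, Fin.sum_univ_succAbove _ i, ← hu, ← mul_neg,
    Units.eq_inv_mul_iff_mul_eq, eq_neg_iff_add_eq_zero]
  rfl

theorem IsUnimodular.isFreeRank_hyperplane {w : Fin (n + 1) → R} (hw : IsUnimodular w) :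
    IsFreeRank n (hyperplane w) := by
  obtain ⟨i, u, hu⟩ := hw
  let forget : hyperplane w →ₗ[R] Fin n → R :=
    LinearMap.funLeft R R i.succAbove ∘ₗ (hyperplane w).subtype
  refine ⟨(LinearEquiv.ofBijective forget ⟨fun x y hxy => ?_, fun y => ?_⟩).symm⟩
  · have hremove : i.removeNth x.1 = i.removeNth y.1 := hxy
    have hx := (mem_hyperplane_iff_apply_eq hu).1 x.2
    have hy := (mem_hyperplane_iff_apply_eq hu).1 y.2
    rw [hremove, ← hy] at hx
    exact Subtype.ext (funext (i.forall_iff_succAbove.2 ⟨hx, congrFun hremove⟩))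
  · let x : Fin (n + 1) → R := i.insertNth (-(↑u⁻¹ * i.removeNth w ⬝ᵥ y)) y
    have hx : x ∈ hyperplane w := by rw [mem_hyperplane_iff_apply_eq hu]; simp [x]
    exact ⟨⟨x, hx⟩, funext fun j => i.insertNth_apply_succAbove (α := fun _ => R) _ y j⟩

end Hyperplane

section Pencil

variable {R : Type*} [CommRing R]

/-- The dual coordinates `w₀ + c • w₁` and `w₁ + c • w₀` run over all lines through the point
spanned by `v`: they are unimodular, and `w₀`, `w₁` generate the linear forms vanishing at `v`. -/
structure IsPencilBasis (v w₀ w₁ : Fin 3 → R) : Prop where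
  dotProduct_left : w₀ ⬝ᵥ v = 0
  dotProduct_right : w₁ ⬝ᵥ v = 0
  isUnimodular_left_add (c : R) : IsUnimodular (w₀ + c • w₁)
  isUnimodular_right_add (c : R) : IsUnimodular (w₁ + c • w₀)
  exists_eq_smul_add_smul {w : Fin 3 → R} (hw : w ⬝ᵥ v = 0) : ∃ a b : R, w = a • w₀ + b • w₁

/-- If `e ⬝ᵥ w₀ = 1`, the second generator is the cross product `e ⨯₃ v`. -/
theorem IsUnimodular.exists_isPencilBasis [IsLocalRing R] {v w₀ : Fin 3 → R}
    (hv : IsUnimodular v) (hw₀ : IsUnimodular w₀) (hw₀v : w₀ ⬝ᵥ v = 0) :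
    ∃ w₁, IsPencilBasis v w₀ w₁ := by
  obtain ⟨g, hg⟩ := hv.exists_dotProduct_eq_one
  obtain ⟨e, he⟩ := hw₀.exists_dotProduct_eq_one
  set w₁ := e ⨯₃ v
  set f := w₀ ⨯₃ g
  have hew₁ : e ⬝ᵥ w₁ = 0 := dot_self_cross e v
  have hfw₀ : f ⬝ᵥ w₀ = 0 := by rw [dotProduct_comm, dot_self_cross]
  have hfw₁ : f ⬝ᵥ w₁ = 1 := by
    rw [cross_dot_cross, hw₀v, hg, dotProduct_comm w₀ e, he]; ring
  refine ⟨w₁, hw₀v, by rw [dotProduct_comm, dot_cross_self], fun c => ?_, fun c => ?_,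
    fun {w} hw => ⟨e ⬝ᵥ w, f ⬝ᵥ w, ?_⟩⟩
  · apply isUnimodular_of_dotProduct_eq_one (g := e)
    simp [he, hew₁]
  · apply isUnimodular_of_dotProduct_eq_one (g := f)
    simp [hfw₀, hfw₁]
  · set y := w - (e ⬝ᵥ w) • w₀
    have hye : y ⬝ᵥ e = 0 := by
      simp [y, sub_dotProduct, dotProduct_comm w₀ e, he, dotProduct_comm w e]
    have hyv : y ⬝ᵥ v = 0 := by simp [y, sub_dotProduct, hw, hw₀v]
    have hcross : y ⨯₃ w₁ = 0 := by
      rw [cross_cross_eq_smul_sub_smul', hyv, dotProduct_comm e y, hye]; simp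
    have hfy : f ⬝ᵥ y = f ⬝ᵥ w := by simp [y, hfw₀]
    have hy : y = (f ⬝ᵥ w) • w₁ := by
      have h := cross_cross_eq_smul_sub_smul' f y w₁
      rw [hcross, map_zero, hfw₁, one_smul, dotProduct_comm y f, hfy] at h
      exact sub_eq_zero.1 h.symm
    rw [← hy, add_sub_cancel]

theorem IsUnimodular.exists_isUnimodular_dotProduct_eq_zero_and [Nontrivial R] [PreValuationRing R]
    {v : Fin 3 → R} (hv : IsUnimodular v) (x : Fin 3 → R) :
    ∃ w, IsUnimodular w ∧ w ⬝ᵥ v = 0 ∧ w ⬝ᵥ x = 0 := by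
  obtain ⟨w₀, hw₀, hw₀v⟩ := hv.exists_isUnimodular_dotProduct_eq_zero
  obtain ⟨w₁, hw⟩ := hv.exists_isPencilBasis hw₀ hw₀v
  obtain ⟨c, hc⟩ | ⟨c, hc⟩ := ValuationRing.dvd_total (w₀ ⬝ᵥ x) (w₁ ⬝ᵥ x)
  · refine ⟨w₁ + -c • w₀, hw.isUnimodular_right_add _, ?_, ?_⟩ <;>
      simp [add_dotProduct, hw.dotProduct_left, hw.dotProduct_right, hc, mul_comm]
  · refine ⟨w₀ + -c • w₁, hw.isUnimodular_left_add _, ?_, ?_⟩ <;>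
      simp [add_dotProduct, hw.dotProduct_left, hw.dotProduct_right, hc, mul_comm]

end Pencil

section Arc

variable {R : Type} [CommRing R] {H : Set (Submodule R (Fin 3 → R))}

/-- An arc of PHG(2, R): a set of points with at most two on each line. -/
def IsArc (H : Set (Submodule R (Fin 3 → R))) : Prop :=
  (∀ P ∈ H, IsPoint P) ∧ ∀ L, IsLine L → {P ∈ H | P ≤ L}.ncard ≤ 2

theorem IsHyperoval.isArc (hH : IsHyperoval H) : IsArc H := ⟨hH.1, hH.2.2⟩

theorem IsArc.eq_of_le_hyperplane [Finite R] (hH : IsArc H) {w : Fin 3 → R} (hw : IsUnimodular w)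
    {P Q S : Submodule R (Fin 3 → R)} (hP : P ∈ H) (hQ : Q ∈ H) (hS : S ∈ H)
    (hPw : P ≤ hyperplane w) (hQw : Q ≤ hyperplane w) (hSw : S ≤ hyperplane w)
    (hQP : Q ≠ P) (hSP : S ≠ P) : Q = S := by
  by_contra hQS
  have hthree : 2 < {T ∈ H | T ≤ hyperplane w}.ncard :=
    (Set.two_lt_ncard (Set.toFinite _)).2
      ⟨P, ⟨hP, hPw⟩, Q, ⟨hQ, hQw⟩, S, ⟨hS, hSw⟩, hQP.symm, hSP.symm, hQS⟩
  exact hthree.not_ge (hH.2 _ hw.isFreeRank_hyperplane)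

/-- Join `P` to each further point `Q` of the arc by a line with dual coordinates
`a • w₀ + b • w₁`. If `b` were not a unit, this line would also contain `P'`; hence `b` can be
normalised to `1`, and the slope `a` determines the line. -/
theorem IsArc.exists_slope [Finite R] [Nontrivial R] [PreValuationRing R] (hH : IsArc H) {π : R}
    (hπ : ∀ a, ¬IsUnit a → a * π = 0) {v x w₀ w₁ : Fin 3 → R} (hv : IsUnimodular v)
    (hw : IsPencilBasis v w₀ w₁) (hw₀x : w₀ ⬝ᵥ x = 0) (hP : span R {v} ∈ H)
    (hP' : span R {v + π • x} ∈ H) (hne : span R {v + π • x} ≠ span R {v})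
    {Q : Submodule R (Fin 3 → R)} (hQ : Q ∈ H \ {span R {v}, span R {v + π • x}}) :
    ∃ c : R, Q ≤ hyperplane (w₁ + c • w₀) := by
  obtain ⟨hQH, hQ⟩ := hQ
  obtain ⟨hQP, hQP'⟩ : Q ≠ span R {v} ∧ Q ≠ span R {v + π • x} := by simpa using hQ
  obtain ⟨q, -, rfl⟩ := hH.1 Q hQH
  obtain ⟨w, hwu, hwv, hwq⟩ := hv.exists_isUnimodular_dotProduct_eq_zero_and q
  obtain ⟨a, b, rfl⟩ := hw.exists_eq_smul_add_smul hwv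
  have hb : IsUnit b := by
    by_contra hb
    have hwP' : (a • w₀ + b • w₁) ⬝ᵥ (v + π • x) = 0 := by
      rw [dotProduct_add, hwv, dotProduct_smul, add_dotProduct, smul_dotProduct, hw₀x,
        smul_dotProduct, smul_zero, zero_add, zero_add, smul_smul, mul_comm, hπ b hb, zero_smul]
    exact hQP' (hH.eq_of_le_hyperplane hwu hP hQH hP' (span_singleton_le_hyperplane.2 hwv)
      (span_singleton_le_hyperplane.2 hwq) (span_singleton_le_hyperplane.2 hwP') hQP hne)
  obtain ⟨u, rfl⟩ := hb
  refine ⟨↑u⁻¹ * a, span_singleton_le_hyperplane.2 ?_⟩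
  have hscale : w₁ + ((↑u⁻¹ : R) * a) • w₀ = (↑u⁻¹ : R) • (a • w₀ + (u : R) • w₁) := by
    simp [smul_smul, add_comm]
  rw [hscale, smul_dotProduct, hwq, smul_zero]

theorem IsArc.ncard_le_card_add_two [Finite R] [Nontrivial R] [PreValuationRing R] (hH : IsArc H)
    {π : R} (hπ : ∀ a, ¬IsUnit a → a * π = 0) {v x : Fin 3 → R} (hv : IsUnimodular v)
    (hP : span R {v} ∈ H) (hP' : span R {v + π • x} ∈ H)
    (hne : span R {v + π • x} ≠ span R {v}) : H.ncard ≤ Nat.card R + 2 := by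
  obtain ⟨w₀, hw₀, hw₀v, hw₀x⟩ := hv.exists_isUnimodular_dotProduct_eq_zero_and x
  obtain ⟨w₁, hw⟩ := hv.exists_isPencilBasis hw₀ hw₀v
  have hPw (c : R) : span R {v} ≤ hyperplane (w₁ + c • w₀) :=
    span_singleton_le_hyperplane.2 <| by
      simp [add_dotProduct, hw.dotProduct_left, hw.dotProduct_right]
  have hslope : ∀ Q ∈ H \ {span R {v}, span R {v + π • x}}, ∃ c : R, Q ≤ hyperplane (w₁ + c • w₀) :=
    fun Q hQ => hH.exists_slope hπ hv hw hw₀x hP hP' hne hQ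
  choose! slope hslope using hslope
  have hinj : Set.InjOn slope (H \ {span R {v}, span R {v + π • x}}) := by
    intro Q hQ S hS hQS
    exact hH.eq_of_le_hyperplane (hw.isUnimodular_right_add (slope Q)) hP hQ.1 hS.1 (hPw _)
      (hslope Q hQ) (hQS ▸ hslope S hS) (fun h => hQ.2 (.inl h)) (fun h => hS.2 (.inl h))
  calc H.ncard
    _ ≤ (H \ {span R {v}, span R {v + π • x}}).ncard +
          ({span R {v}, span R {v + π • x}} : Set _).ncard :=
        Set.ncard_le_ncard_sdiff_add_ncard _ _
    _ ≤ Nat.card R + 2 := by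
        gcongr
        · rw [← Set.ncard_univ]
          exact Set.ncard_le_ncard_of_injOn slope (fun _ _ => Set.mem_univ _) hinj
        · exact (Set.ncard_pair hne.symm).le

end Arc

section Frame

variable {K V : Type*} [Ring K] [AddCommGroup V] [Module K V] {n : ℕ}

theorem linearIndependent_comp_succAbove_of_sum_eq_zero {v : Fin (n + 1) → V} (hsum : ∑ i, v i = 0)
    {i : Fin (n + 1)} (hi : LinearIndependent K (v ∘ i.succAbove)) (j : Fin (n + 1)) :
    LinearIndependent K (v ∘ j.succAbove) := by
  rw [Fintype.linearIndependent_iff] at hi ⊢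
  intro g hg
  let G : Fin (n + 1) → K := j.insertNth 0 g
  have hG : ∑ k, G k • v k = 0 := by
    rw [Fin.sum_univ_succAbove _ j]
    simpa [G] using hg
  have hshift : ∑ k, (G k - G i) • v k = 0 := by
    simp [sub_smul, Finset.sum_sub_distrib, hG, ← Finset.smul_sum, hsum]
  rw [Fin.sum_univ_succAbove _ i, sub_self, zero_smul, zero_add] at hshift
  have hconst : ∀ k, G k = G i :=
    i.forall_iff_succAbove.2 ⟨rfl, fun k => sub_eq_zero.1 (hi _ hshift k)⟩
  intro k
  calc g k = G (j.succAbove k) := (j.insertNth_apply_succAbove (α := fun _ => K) 0 g k).symm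
    _ = G j := (hconst _).trans (hconst j).symm
    _ = 0 := j.insertNth_apply_same (α := fun _ => K) 0 g

variable (K) in
/-- A projective frame: `n + 1` vectors, to be used with `n = dim V`, any `n` of which are linearly
independent. For `n = 3` these are the quadrangles of a projective plane. -/
def IsProjectiveFrame (v : Fin (n + 1) → V) : Prop :=
  ∀ i : Fin (n + 1), LinearIndependent K (v ∘ i.succAbove)

theorem IsProjectiveFrame.linearIndependent_comp {v : Fin (n + 1) → V}
    (hv : IsProjectiveFrame K v) {m : ℕ} (hm : m ≤ n) {f : Fin m → Fin (n + 1)}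
    (hf : f.Injective) : LinearIndependent K (v ∘ f) := by
  obtain ⟨i, hi⟩ : ∃ i, i ∉ Set.range f := by
    by_contra! hsurj
    have := Fintype.card_le_of_surjective f hsurj
    simp only [Fintype.card_fin] at this
    omega
  have hlift (k : Fin m) : ∃ l, i.succAbove l = f k :=
    Fin.exists_succAbove_eq fun h => hi ⟨k, h⟩
  choose g hg using hlift
  obtain rfl : i.succAbove ∘ g = f := funext hg
  exact (hv i).comp g hf.of_comp

theorem IsProjectiveFrame.ne_zero [Nontrivial K] {v : Fin (n + 1) → V}
    (hv : IsProjectiveFrame K v) (hn : n ≠ 0) (i : Fin (n + 1)) : v i ≠ 0 :=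
  (hv.linearIndependent_comp (Nat.one_le_iff_ne_zero.2 hn)
    (Function.injective_of_subsingleton (fun _ : Fin 1 => i))).ne_zero 0

theorem IsProjectiveFrame.coeff_ne_zero {v : Fin (n + 1) → V} (hv : IsProjectiveFrame K v)
    {g : Fin (n + 1) → K} (hg : ∑ i, g i • v i = 0) (hg0 : g ≠ 0) (i : Fin (n + 1)) :
    g i ≠ 0 := by
  intro hi
  rw [Fin.sum_univ_succAbove _ i, hi, zero_smul, zero_add] at hg
  have hrest := Fintype.linearIndependent_iff.1 (hv i) _ hg
  exact hg0 (funext (i.forall_iff_succAbove.2 ⟨hi, hrest⟩))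

end Frame

section FrameZModTwo

variable {V : Type*} [AddCommGroup V] [Module (ZMod 2) V] [Finite V]

theorem isProjectiveFrame_zmod_two_iff {n : ℕ} (hn : finrank (ZMod 2) V = n)
    {v : Fin (n + 1) → V} :
    IsProjectiveFrame (ZMod 2) v ↔
      LinearIndependent (ZMod 2) (v ∘ Fin.castSucc) ∧ ∑ i, v i = 0 := by
  rw [← Fin.succAbove_last]
  refine ⟨fun hv => ⟨hv _, ?_⟩,
    fun ⟨hv, hsum⟩ => linearIndependent_comp_succAbove_of_sum_eq_zero hsum hv⟩
  have hdep : ¬LinearIndependent (ZMod 2) v := fun h => by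
    have := h.fintype_card_le_finrank
    simp [hn] at this
  obtain ⟨g, hg, hg0⟩ := Fintype.not_linearIndependent_iff.1 hdep
  have hone (i : Fin (n + 1)) : g i = 1 :=
    Fin.eq_one_of_ne_zero _ (hv.coeff_ne_zero hg (Function.ne_iff.2 hg0) i)
  simpa [hone] using hg

/-- The last vector of a frame over `𝔽₂` is minus the sum of the others. -/
theorem card_isProjectiveFrame_zmod_two {n : ℕ} (hn : finrank (ZMod 2) V = n) :
    Nat.card {v : Fin (n + 1) → V // IsProjectiveFrame (ZMod 2) v} =
      ∏ i : Fin n, (2 ^ n - 2 ^ (i : ℕ)) := by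
  have hcard := card_linearIndependent (K := ZMod 2) (V := V) le_rfl
  rw [hn, ZMod.card] at hcard
  rw [← hcard]
  have hextend {s : Fin n → V} (hs : LinearIndependent (ZMod 2) s) :
      IsProjectiveFrame (ZMod 2) (Fin.snoc s (-∑ i, s i) : Fin (n + 1) → V) := by
    refine (isProjectiveFrame_zmod_two_iff hn).2 ⟨?_, ?_⟩
    · simpa [Function.comp_def] using hs
    · simp [Fin.sum_univ_castSucc]
  refine Nat.card_congr
    { toFun v := ⟨v.1 ∘ Fin.castSucc, ((isProjectiveFrame_zmod_two_iff hn).1 v.2).1⟩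
      invFun s := ⟨_, hextend s.2⟩
      left_inv v := Subtype.ext ?_
      right_inv s := Subtype.ext (funext fun i => by simp) }
  have hsum := ((isProjectiveFrame_zmod_two_iff hn).1 v.2).2
  rw [Fin.sum_univ_castSucc] at hsum
  refine funext (Fin.lastCases ?_ fun i => ?_)
  · simpa using (eq_neg_of_add_eq_zero_right hsum).symm
  · simp

end FrameZModTwo

section Quotient

theorem injective_triple_iff_ne {α : Type*} {a b c : α} :
    Function.Injective ![a, b, c] ↔ a ≠ b ∧ a ≠ c ∧ b ≠ c := by
  rw [Matrix.vecCons, Fin.cons_injective_iff, injective_pair_iff_ne]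
  simp only [range_cons, range_empty, Set.union_empty, Set.mem_union, Set.mem_singleton_iff]
  tauto

theorem collinearF2_span_singleton_iff {a b c : Fin 3 → ZMod 2} :
    CollinearF2 (span _ {a}) (span _ {b}) (span _ {c}) ↔
      ¬LinearIndependent (ZMod 2) ![a, b, c] := by
  have hspan : span (ZMod 2) {a} ⊔ span _ {b} ⊔ span _ {c} = span _ (Set.range ![a, b, c]) := by
    simp only [Matrix.range_cons, Matrix.range_empty, Set.union_empty, span_union, sup_assoc]
  rw [CollinearF2, hspan, linearIndependent_iff_card_le_finrank_span, Fintype.card_fin, Set.finrank,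
    not_le, Nat.lt_succ_iff]

theorem span_singleton_zmod_two_injective {V : Type*} [AddCommGroup V] [Module (ZMod 2) V] :
    Function.Injective fun x : V => span (ZMod 2) {x} := by
  intro x y hxy
  obtain ⟨u, rfl⟩ := span_singleton_eq_span_singleton.1 hxy
  rw [Subsingleton.elim u 1, one_smul]

theorem isQuadrangleT_iff {Q : Fin 4 → Submodule R4 (Fin 3 → R4)} (hQ : ∀ i, IsPoint (Q i))
    {q : Fin 4 → Fin 3 → ZMod 2} (hq : ∀ i, redPt (Q i) = span (ZMod 2) {q i}) :
    IsQuadrangleT Q ↔ IsProjectiveFrame (ZMod 2) q := by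
  have hcomp (f : Fin 3 → Fin 4) : q ∘ f = ![q (f 0), q (f 1), q (f 2)] := by
    ext i : 1
    fin_cases i <;> rfl
  simp only [IsQuadrangleT, hq, collinearF2_span_singleton_iff, not_not]
  constructor
  · rintro ⟨-, -, hindep⟩ i
    rw [hcomp]
    have hi := i.succAbove_right_injective
    exact hindep _ _ _ (hi.ne (by decide)) (hi.ne (by decide)) (hi.ne (by decide))
  · intro hframe
    refine ⟨hQ, fun i j hij hspan => ?_, fun i j k hij hik hjk => ?_⟩
    · have hpair : Function.Injective ![i, j] := injective_pair_iff_ne.2 hij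
      have hinj := (hframe.linearIndependent_comp (by norm_num) hpair).injective
      have hqij : q i = q j := span_singleton_zmod_two_injective hspan
      exact Fin.zero_ne_one (hinj hqij : (0 : Fin 2) = 1)
    · have htriple : Function.Injective ![i, j, k] := injective_triple_iff_ne.2 ⟨hij, hik, hjk⟩
      have hindep := hframe.linearIndependent_comp le_rfl htriple
      rwa [hcomp] at hindep

theorem redPt_span_singleton (v : Fin 3 → R4) :
    redPt (span R4 {v}) = span (ZMod 2) {redMap v} := by
  rw [redPt, map_span, Set.image_singleton]

theorem redMap_ne_zero {v : Fin 3 → R4} (hv : IsUnimodular v) : redMap v ≠ 0 := by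
  obtain ⟨i, hi⟩ := hv
  exact fun h => (hi.map red2).ne_zero (congrFun h i)

theorem exists_eq_add_two_smul_of_redMap_eq {v v' : Fin 3 → R4} (h : redMap v = redMap v') :
    ∃ x : Fin 3 → R4, v' = v + (2 : R4) • x := by
  have hcoord : ∀ a b : ZMod 4, red2 a = red2 b → ∃ c, b = a + 2 * c := by decide
  choose x hx using fun i => hcoord _ _ (congrFun h i)
  exact ⟨x, funext hx⟩

end Quotient

section Hyperoval

variable {H : Set (Submodule R4 (Fin 3 → R4))}

instance : Nontrivial (ZMod 4) := ⟨0, 1, by decide⟩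

instance : PreValuationRing (ZMod 4) := ⟨by decide⟩

theorem mul_two_eq_zero_of_not_isUnit : ∀ a : ZMod 4, ¬IsUnit a → a * 2 = 0 := by
  decide

theorem IsHyperoval.injOn_redPt (hH : IsHyperoval H) : Set.InjOn redPt H := by
  intro P hP P' hP' hred
  obtain ⟨v, hv, rfl⟩ := hH.1 P hP
  obtain ⟨v', -, rfl⟩ := hH.1 P' hP'
  rw [redPt_span_singleton, redPt_span_singleton] at hred
  obtain ⟨x, rfl⟩ :=
    exists_eq_add_two_smul_of_redMap_eq (span_singleton_zmod_two_injective hred)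
  by_contra hne
  have hle := hH.isArc.ncard_le_card_add_two mul_two_eq_zero_of_not_isUnit hv hP hP' (Ne.symm hne)
  rw [hH.2.1, Nat.card_zmod] at hle
  omega

theorem IsHyperoval.exists_bijOn_compl_zero (hH : IsHyperoval H) :
    ∃ ρ : Submodule R4 (Fin 3 → R4) → Fin 3 → ZMod 2,
      Set.BijOn ρ H {0}ᶜ ∧ ∀ P ∈ H, redPt P = span (ZMod 2) {ρ P} := by
  have hspan : ∀ P ∈ H, ∃ x : Fin 3 → ZMod 2, x ≠ 0 ∧ redPt P = span (ZMod 2) {x} := by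
    intro P hP
    obtain ⟨v, hv, rfl⟩ := hH.1 P hP
    exact ⟨redMap v, redMap_ne_zero hv, redPt_span_singleton v⟩
  choose! ρ hρ using hspan
  have hinj : Set.InjOn ρ H := fun P hP P' hP' h =>
    hH.injOn_redPt hP hP' (by rw [(hρ P hP).2, (hρ P' hP').2, h])
  have himage : ρ '' H = {0}ᶜ := by
    refine Set.eq_of_subset_of_ncard_le (Set.image_subset_iff.2 fun P hP => (hρ P hP).1) ?_
    rw [hinj.ncard_image, hH.2.1, Set.ncard_compl]
    simp
  exact ⟨ρ, himage ▸ hinj.bijOn_image, fun P hP => (hρ P hP).2⟩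

end Hyperoval

/-- Every hyperoval of PHG(2, ℤ/4ℤ) contains exactly 168 ordered quadrangles. -/
theorem hyperoval_quadrangle_count :
    ∀ H : Set (Submodule R4 (Fin 3 → R4)), IsHyperoval H →
      Nat.card {Q : Fin 4 → Submodule R4 (Fin 3 → R4) //
        (∀ i, Q i ∈ H) ∧ IsQuadrangleT Q} = 168 := by
  intro H hH
  obtain ⟨ρ, hρ, hred⟩ := hH.exists_bijOn_compl_zero
  have hquad {Q : Fin 4 → Submodule R4 (Fin 3 → R4)} (hQ : ∀ i, Q i ∈ H) :
      IsQuadrangleT Q ↔ IsProjectiveFrame (ZMod 2) (ρ ∘ Q) :=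
    isQuadrangleT_iff (fun i => hH.1 _ (hQ i)) fun i => hred _ (hQ i)
  have hbij : Set.BijOn (ρ ∘ ·) {Q : Fin 4 → _ | (∀ i, Q i ∈ H) ∧ IsQuadrangleT Q}
      {q | IsProjectiveFrame (ZMod 2) q} := by
    refine ⟨fun Q hQ => (hquad hQ.1).1 hQ.2, fun Q hQ Q' hQ' h => ?_, fun q hq => ?_⟩
    · exact funext fun i => hρ.injOn (hQ.1 i) (hQ'.1 i) (congrFun h i)
    · choose Q hQ hQq using fun i => hρ.surjOn (IsProjectiveFrame.ne_zero hq three_ne_zero i)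
      obtain rfl : ρ ∘ Q = q := funext hQq
      exact ⟨Q, ⟨hQ, (hquad hQ).2 hq⟩, rfl⟩
  calc Nat.card {Q : Fin 4 → _ // (∀ i, Q i ∈ H) ∧ IsQuadrangleT Q}
    _ = Nat.card {q : Fin 4 → Fin 3 → ZMod 2 // IsProjectiveFrame (ZMod 2) q} :=
        Nat.card_congr (hbij.equiv _)
    _ = ∏ i : Fin 3, (2 ^ 3 - 2 ^ (i : ℕ)) := card_isProjectiveFrame_zmod_two (by simp)
    _ = 168 := by decide
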